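/- Let T be a tournament on n ≥ 9 vertices with π₂(T) > (n−9)/12 and i(T) < 2π₂(T) − (n+8)/6. Then T is path extendable. -/

import Mathlib

open Finset

variable {V : Type*} [Fintype V] [DecidableEq V]

/-- A tournament: irreflexive, and between any two distinct vertices exactly one arc. -/
def IsTournament (r : V → V → Prop) : Prop :=
  (∀ u, ¬ r u u) ∧ ∀ u v : V, u ≠ v → Xor' (r u v) (r v u)

/-- Out-degree. -/
def outDeg (r : V → V → Prop) [DecidableRel r] (u : V) : ℕ :=
  (Finset.univ.filter fun v => r u v).card

/-- In-degree. -/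
def inDeg (r : V → V → Prop) [DecidableRel r] (u : V) : ℕ :=
  (Finset.univ.filter fun v => r v u).card

/-- Number of directed 2-paths from `u` to `v`. -/
def p2 (r : V → V → Prop) [DecidableRel r] (u v : V) : ℕ :=
  (Finset.univ.filter fun w => r u w ∧ r w v).card

/-- `π` is the minimum of `p2` over ordered pairs of distinct vertices. -/
def IsPi2 (r : V → V → Prop) [DecidableRel r] (π : ℕ) : Prop :=
  (∀ x y : V, x ≠ y → π ≤ p2 r x y) ∧ ∃ x y : V, x ≠ y ∧ p2 r x y = π

/-- `i` is the irregularity: the maximum of |d⁺(u) − d⁻(u)|. -/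
def IsIrreg (r : V → V → Prop) [DecidableRel r] (i : ℕ) : Prop :=
  (∀ u : V, ((outDeg r u : ℤ) - inDeg r u).natAbs ≤ i) ∧
    ∃ u : V, ((outDeg r u : ℤ) - inDeg r u).natAbs = i

/-- A directed path, as a duplicate-free list whose consecutive members are arcs. -/
def IsDirPath (r : V → V → Prop) (l : List V) : Prop :=
  l.Nodup ∧ l.Chain' r

/-- A path is extendable if some path with the same endpoints uses its vertices plus one more. -/
def Extendable (r : V → V → Prop) (l : List V) : Prop :=
  ∃ w ∉ l.toFinset, ∃ l' : List V, IsDirPath r l' ∧ l'.head? = l.head? ∧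
    l'.getLast? = l.getLast? ∧ l'.toFinset = insert w l.toFinset

/-- Every nonhamiltonian path (on at least two vertices) is extendable. -/
def PathExtendable (r : V → V → Prop) : Prop :=
  ∀ l : List V, IsDirPath r l → 2 ≤ l.length →
    l.toFinset ≠ Finset.univ → Extendable r l

/-!
If a path `p₀ → ⋯ → pₘ` cannot be extended by inserting an outside vertex, then every outside
vertex `w` has a threshold: it dominates an initial segment of the path and is dominated by the
rest. Let `π` bound the number of 2-paths from below and let `i` be the irregularity.

Suppose some outside `w` satisfies `w → p₁` and `pₘ₋₁ → w`. Then no `p_b` with `0 < b < m - 1` has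
both `p₀ → p_{b+1}` and `p_b → pₘ`, since otherwise
`p₀ → p_{b+1} ⋯ pₘ₋₁ → w → p₁ ⋯ p_b → pₘ` would be an extension. So the out-degree of `p₀` and
the in-degree of `pₘ` inside the path add up to at most `m + 2`, while each is at least `2π + 1`.
If both `p₀` has an out-neighbour and `pₘ` an in-neighbour outside the path, comparing degrees
gives `3m < n + 3i`. Otherwise neither does, hence `n ≤ m + 3 + i`, and the outside vertex `x` with
the fewest out-neighbours on the path has either at least `2π + 1` out-neighbours outside the path
or none; in the last case 2-paths at the threshold of `x` yield an extension.

If there is no such `w`, every outside vertex is dominated by `p₁, …, pₘ` or dominates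
`p₀, …, pₘ₋₁`. Both kinds occur, which bounds `3m` by `n + 2i + 1`, while the 2-paths starting and
ending at `p₁` force `4π ≤ m`. Each case contradicts `12π > n + 8 + 6i`.
-/

section Tournament

variable {α : Type*} {r : α → α → Prop}

namespace IsTournament

theorem swap (hT : IsTournament r) : IsTournament (Function.swap r) :=
  ⟨hT.1, fun u v h => hT.2 v u h.symm⟩

theorem asymm (hT : IsTournament r) {u v : α} (huv : r u v) : ¬ r v u := by
  intro hvu
  obtain rfl | hne := eq_or_ne u v
  · exact hT.1 u huv
  · rcases hT.2 u v hne with h | h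
    · exact h.2 hvu
    · exact h.2 huv

theorem ne (hT : IsTournament r) {u v : α} (huv : r u v) : u ≠ v := by
  rintro rfl
  exact hT.1 u huv

theorem rel_of_not_rel (hT : IsTournament r) {u v : α} (hne : u ≠ v) (huv : ¬ r u v) : r v u :=
  (hT.2 u v hne).elim (fun h => absurd h.1 huv) And.left

end IsTournament

variable [DecidableRel r]

/-- The out-neighbourhood of `x` inside `S`, so that out-degrees into parts of the vertex set can
be counted separately. -/
def outNbhd (r : α → α → Prop) [DecidableRel r] (S : Finset α) (x : α) : Finset α :=
  {y ∈ S | r x y}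

/-- The in-neighbourhood of `x` inside `S`, the counterpart of `outNbhd` under reversal. -/
def inNbhd (r : α → α → Prop) [DecidableRel r] (S : Finset α) (x : α) : Finset α :=
  {y ∈ S | r y x}

variable {S A E : Finset α} {x y : α}

@[simp]
theorem mem_outNbhd : y ∈ outNbhd r S x ↔ y ∈ S ∧ r x y := mem_filter

@[simp]
theorem mem_inNbhd : y ∈ inNbhd r S x ↔ y ∈ S ∧ r y x := mem_filter

theorem inNbhd_swap (S : Finset α) (x : α) : inNbhd (Function.swap r) S x = outNbhd r S x := rfl

theorem outNbhd_swap (S : Finset α) (x : α) : outNbhd (Function.swap r) S x = inNbhd r S x := rfl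

theorem IsTournament.card_inNbhd_add_card_outNbhd_add_one (hT : IsTournament r) (hx : x ∈ S) :
    #(inNbhd r S x) + #(outNbhd r S x) + 1 = #S := by
  classical
  have hdisj : Disjoint (inNbhd r S x) (outNbhd r S x) :=
    disjoint_filter.2 fun _ _ h => hT.asymm h
  have herase : S.erase x = inNbhd r S x ∪ outNbhd r S x := by
    ext y
    simp only [mem_erase, mem_union, mem_inNbhd, mem_outNbhd]
    constructor
    · rintro ⟨hne, hy⟩
      by_cases h : r y x
      · exact .inl ⟨hy, h⟩
      · exact .inr ⟨hy, hT.rel_of_not_rel hne h⟩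
    · rintro (⟨hy, h⟩ | ⟨hy, h⟩)
      · exact ⟨hT.ne h, hy⟩
      · exact ⟨(hT.ne h).symm, hy⟩
  rw [← card_union_of_disjoint hdisj, ← herase, card_erase_add_one hx]

theorem exists_card_outNbhd_le_card_inNbhd (r : α → α → Prop) [DecidableRel r] (hS : S.Nonempty) :
    ∃ x ∈ S, #(outNbhd r S x) ≤ #(inNbhd r S x) :=
  exists_le_of_sum_le hS (sum_card_bipartiteAbove_eq_sum_card_bipartiteBelow r).le

variable [Fintype α]

theorem outDeg_eq_card_outNbhd_add_card_outNbhd_compl [DecidableEq α] (r : α → α → Prop)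
    [DecidableRel r] (S : Finset α) (x : α) :
    outDeg r x = #(outNbhd r S x) + #(outNbhd r Sᶜ x) := by
  rw [outDeg, outNbhd, outNbhd, ← card_union_of_disjoint
    (disjoint_filter_filter disjoint_compl_right), ← filter_union, union_compl]

theorem inDeg_eq_card_inNbhd_add_card_inNbhd_compl [DecidableEq α] (r : α → α → Prop)
    [DecidableRel r] (S : Finset α) (x : α) :
    inDeg r x = #(inNbhd r S x) + #(inNbhd r Sᶜ x) :=
  outDeg_eq_card_outNbhd_add_card_outNbhd_compl (Function.swap r) S x

theorem p2_swap (r : α → α → Prop) [DecidableRel r] (x y : α) :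
    p2 (Function.swap r) x y = p2 r y x := by
  simp only [p2, Function.swap, and_comm]

theorem le_p2_swap {π : ℕ} (hπ : ∀ x y : α, x ≠ y → π ≤ p2 r x y) (x y : α) (hxy : x ≠ y) :
    π ≤ p2 (Function.swap r) x y :=
  (hπ y x hxy.symm).trans_eq (p2_swap r x y).symm

theorem p2_le_card (h : ∀ q, r x q → r q y → q ∈ S) : p2 r x y ≤ #S :=
  card_le_card fun q hq => h q (mem_filter.1 hq).2.1 (mem_filter.1 hq).2.2

theorem exists_two_path (h : 0 < p2 r x y) : ∃ q, r x q ∧ r q y := by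
  obtain ⟨q, hq⟩ := card_pos.1 h
  exact ⟨q, (mem_filter.1 hq).2⟩

theorem exists_two_path_ne (h : 2 ≤ p2 r x y) (z : α) : ∃ q ≠ z, r x q ∧ r q y := by
  obtain ⟨q, hq, hqz⟩ := exists_mem_ne h z
  exact ⟨q, hqz, (mem_filter.1 hq).2⟩

namespace IsTournament

theorem inDeg_add_outDeg_add_one (hT : IsTournament r) (x : α) :
    inDeg r x + outDeg r x + 1 = Fintype.card α :=
  hT.card_inNbhd_add_card_outNbhd_add_one (mem_univ x)

theorem card_le_of_nbhd_compl_eq_empty [DecidableEq α] (hT : IsTournament r) {i : ℕ}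
    (hi : ∀ u, ((outDeg r u : ℤ) - inDeg r u).natAbs ≤ i) (hx : outNbhd r Sᶜ x = ∅)
    (hy : inNbhd r Sᶜ y = ∅) :
    Fintype.card α ≤ #(outNbhd r S x) + #(inNbhd r S y) + 1 + i := by
  have hout := outDeg_eq_card_outNbhd_add_card_outNbhd_compl r S x
  have hin := inDeg_eq_card_inNbhd_add_card_inNbhd_compl r S y
  rw [hx, card_empty] at hout
  rw [hy, card_empty] at hin
  have hdegx := hT.inDeg_add_outDeg_add_one x
  have hdegy := hT.inDeg_add_outDeg_add_one y
  have hix := hi x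
  have hiy := hi y
  omega

/-- By averaging, some `y ∈ S` has at most `(#S - 1) / 2` out-neighbours in `S`; the set `E`
collects the possible middle vertices outside `S`. -/
theorem exists_two_mul_p2_to_lt (hT : IsTournament r) (hS : S.Nonempty)
    (h : ∀ y ∈ S, ∀ q, r y q → r q x → q ∈ S ∨ q ∈ E) :
    ∃ y ∈ S, 2 * p2 r y x < #S + 2 * #E := by
  classical
  obtain ⟨y, hy, hle⟩ := exists_card_outNbhd_le_card_inNbhd r hS
  have hp2 : p2 r y x ≤ #(outNbhd r S y ∪ E) := p2_le_card fun q hyq hqx =>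
    mem_union.2 ((h y hy q hyq hqx).imp_left fun hq => mem_outNbhd.2 ⟨hq, hyq⟩)
  have hunion := card_union_le (outNbhd r S y) E
  have hcard := hT.card_inNbhd_add_card_outNbhd_add_one hy
  exact ⟨y, hy, by omega⟩

theorem two_mul_lt_card_outNbhd (hT : IsTournament r) {π : ℕ}
    (hπ : ∀ x y : α, x ≠ y → π ≤ p2 r x y) (hS : (outNbhd r S x).Nonempty)
    (h : ∀ y ∈ S, r x y → ∀ q, r x q → r q y → q ∈ S) : 2 * π < #(outNbhd r S x) := by
  obtain ⟨y, hy, hlt⟩ := hT.swap.exists_two_mul_p2_to_lt (x := x) (E := ∅) hS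
    fun y hy q hqy hxq => .inl <| mem_outNbhd.2
      ⟨h y (mem_outNbhd.1 hy).1 (mem_outNbhd.1 hy).2 q hxq hqy, hxq⟩
  have hle := hπ x y (hT.ne (mem_outNbhd.1 hy).2)
  rw [p2_swap, card_empty] at hlt
  omega

theorem exists_two_mul_card_add_card_le_inDeg (hT : IsTournament r) (hS : S.Nonempty)
    (h : ∀ a ∈ A, ∀ y ∈ S, r a y) : ∃ y ∈ S, 2 * #A + #S ≤ 2 * inDeg r y + 1 := by
  classical
  obtain ⟨y, hy, hle⟩ := exists_card_outNbhd_le_card_inNbhd r hS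
  have hdisj : Disjoint A (inNbhd r S y) := disjoint_left.2 fun a ha haS =>
    hT.1 a (h a ha a (mem_inNbhd.1 haS).1)
  have hsub : A ∪ inNbhd r S y ⊆ inNbhd r univ y := union_subset
    (fun a ha => mem_inNbhd.2 ⟨mem_univ a, h a ha y hy⟩) (filter_subset_filter _ (subset_univ S))
  have hdeg : #A + #(inNbhd r S y) ≤ inDeg r y :=
    (card_union_of_disjoint hdisj).symm.trans_le (card_le_card hsub)
  have hcard := hT.card_inNbhd_add_card_outNbhd_add_one hy
  exact ⟨y, hy, by omega⟩

end IsTournament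

end Tournament

section PathSegment

variable {α : Type*} {r : α → α → Prop} {p : ℕ → α}

/-- The list `[p a, …, p (b - 1)]`, used to cut a path into pieces and rearrange them. -/
def pathSegment (p : ℕ → α) (a b : ℕ) : List α := (List.Ico a b).map p

theorem exists_eq_pathSegment {l : List α} (hl : l ≠ []) : ∃ p, l = pathSegment p 0 l.length := by
  refine ⟨fun j => l.getD j (l.head hl), List.ext_getElem ?_ fun j hj _ => ?_⟩
  · simp [pathSegment]
  · simp [pathSegment, List.Ico.zero_bot, hj]

theorem pathSegment_append {a b c : ℕ} (hab : a ≤ b) (hbc : b ≤ c) :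
    pathSegment p a b ++ pathSegment p b c = pathSegment p a c := by
  rw [pathSegment, pathSegment, ← List.map_append, List.Ico.append_consecutive hab hbc, pathSegment]

theorem head?_pathSegment {a b : ℕ} (hab : a < b) : (pathSegment p a b).head? = some (p a) := by
  simp [pathSegment, List.Ico.eq_cons hab]

theorem getLast?_pathSegment_succ {a b : ℕ} (hab : a ≤ b) :
    (pathSegment p a (b + 1)).getLast? = some (p b) := by
  simp [pathSegment, List.Ico.succ_top hab]

theorem isChain_pathSegment_iff {a b : ℕ} :
    (pathSegment p a b).IsChain r ↔ ∀ j, a ≤ j → j + 1 < b → r (p j) (p (j + 1)) := by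
  simp only [pathSegment, List.Ico, List.isChain_iff_getElem, List.length_map, List.length_range',
    List.getElem_map, List.getElem_range', one_mul]
  constructor
  · intro h j haj hjb
    have := h (j - a) (by omega)
    rwa [← Nat.add_assoc, Nat.add_sub_cancel' haj] at this
  · exact fun h i hi => h (a + i) (by omega) (by omega)

theorem isChain_pathSegment_of_le {a b c d : ℕ} (h : (pathSegment p a d).IsChain r) (hab : a ≤ b)
    (hcd : c ≤ d) : (pathSegment p b c).IsChain r :=
  isChain_pathSegment_iff.2 fun j hbj hjc =>
    isChain_pathSegment_iff.1 h j (hab.trans hbj) (hjc.trans_le hcd)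

end PathSegment

section RigidPath

variable {α : Type*} [DecidableEq α] {r : α → α → Prop} {p : ℕ → α} {m : ℕ}

/-- The vertex set `{p 0, …, p m}` of a path with `m` arcs. -/
def pathVerts (p : ℕ → α) (m : ℕ) : Finset α := (range (m + 1)).image p

theorem mem_pathVerts {v : α} : v ∈ pathVerts p m ↔ ∃ a ≤ m, p a = v := by
  simp [pathVerts]

theorem apply_mem_pathVerts {a : ℕ} (ha : a ≤ m) : p a ∈ pathVerts p m :=
  mem_pathVerts.2 ⟨a, ha, rfl⟩

theorem apply_ne_of_notMem_pathVerts {a : ℕ} (ha : a ≤ m) {w : α} (hw : w ∉ pathVerts p m) :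
    p a ≠ w :=
  fun h => hw (h ▸ apply_mem_pathVerts ha)

theorem exists_threshold {x : α} (hT : IsTournament r) (hx : x ∉ pathVerts p m)
    (hx0 : r x (p 0)) (hxm : r (p m) x) : ∃ t < m, r x (p t) ∧ r (p (t + 1)) x := by
  obtain ⟨t, hpt, hsucc⟩ := Nat.exists_not_and_succ_of_not_zero_of_exists
    (p := fun j => j ≤ m → r (p j) x) (fun h0 => hT.asymm hx0 (h0 m.zero_le)) ⟨m, fun _ => hxm⟩
  obtain ⟨htm, htx⟩ := Classical.not_imp.1 hpt
  have hlt : t < m := htm.lt_of_ne fun h => htx (h ▸ hxm)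
  exact ⟨t, hlt, hT.rel_of_not_rel (apply_ne_of_notMem_pathVerts htm hx) htx, hsucc hlt⟩

theorem pathVerts_reverse (p : ℕ → α) (m : ℕ) :
    pathVerts (fun j => p (m - j)) m = pathVerts p m := by
  ext v
  simp only [mem_pathVerts]
  constructor
  · rintro ⟨a, -, rfl⟩
    exact ⟨m - a, Nat.sub_le m a, rfl⟩
  · rintro ⟨a, ha, rfl⟩
    exact ⟨m - a, Nat.sub_le m a, by rw [Nat.sub_sub_self ha]⟩

theorem toFinset_pathSegment (p : ℕ → α) (m : ℕ) :
    (pathSegment p 0 (m + 1)).toFinset = pathVerts p m := by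
  ext v
  simp [pathSegment, pathVerts]

/-- The path `p 0 → ⋯ → p m` can be extended neither by inserting an outside vertex `w` into one of
its arcs nor by the rerouting `p 0 ⋯ p a → p (b + 1) ⋯ p c → w → p (a + 1) ⋯ p b → p (c + 1) ⋯ p m`.
These are the only ways of extending a path that the argument uses. Values of `p` beyond `m` are
irrelevant. -/
structure IsRigidPath (r : α → α → Prop) (p : ℕ → α) (m : ℕ) : Prop where
  injOn : Set.InjOn p (Set.Iic m)
  rel_succ : ∀ a < m, r (p a) (p (a + 1))
  not_insert : ∀ a < m, ∀ w ∉ pathVerts p m, r (p a) w → ¬ r w (p (a + 1))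
  not_reroute : ∀ a b c, a < b → b < c → c < m → ∀ w ∉ pathVerts p m,
    r (p a) (p (b + 1)) → r (p c) w → r w (p (a + 1)) → ¬ r (p b) (p (c + 1))

theorem extendable_of_perm_cons {l l' : List α} {w : α} (hl : l.Nodup) (hw : w ∉ l)
    (hperm : l'.Perm (w :: l)) (hchain : l'.IsChain r) (hhead : l'.head? = l.head?)
    (hlast : l'.getLast? = l.getLast?) : Extendable r l :=
  ⟨w, by simpa using hw, l', ⟨hperm.nodup_iff.2 (List.nodup_cons.2 ⟨hw, hl⟩), hchain⟩, hhead,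
    hlast, by rw [List.toFinset_eq_of_perm _ _ hperm, List.toFinset_cons]⟩

theorem extendable_of_insert {a : ℕ} {w : α} (hl : IsDirPath r (pathSegment p 0 (m + 1)))
    (ha : a < m) (hw : w ∉ pathSegment p 0 (m + 1)) (haw : r (p a) w) (hwa : r w (p (a + 1))) :
    Extendable r (pathSegment p 0 (m + 1)) := by
  have hsplit : pathSegment p 0 (a + 1) ++ pathSegment p (a + 1) (m + 1) =
      pathSegment p 0 (m + 1) := pathSegment_append (by omega) (by omega)
  have hchain : ∀ b c, c ≤ m + 1 → (pathSegment p b c).IsChain r := fun b _ =>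
    isChain_pathSegment_of_le hl.2 b.zero_le
  refine extendable_of_perm_cons
    (l' := pathSegment p 0 (a + 1) ++ w :: pathSegment p (a + 1) (m + 1)) hl.1 hw ?_ ?_ ?_ ?_
  · rw [← hsplit]
    exact List.perm_middle
  · simp [List.isChain_append, List.isChain_cons, hchain, head?_pathSegment,
      getLast?_pathSegment_succ, ha, ha.le, haw, hwa]
  · simp [List.head?_append, head?_pathSegment]
  · simp [List.getLast?_append, List.getLast?_cons, getLast?_pathSegment_succ, ha]

theorem extendable_of_reroute {a b c : ℕ} {w : α} (hl : IsDirPath r (pathSegment p 0 (m + 1)))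
    (hab : a < b) (hbc : b < c) (hcm : c < m) (hw : w ∉ pathSegment p 0 (m + 1))
    (hab' : r (p a) (p (b + 1))) (hcw : r (p c) w) (hwa : r w (p (a + 1)))
    (hbc' : r (p b) (p (c + 1))) : Extendable r (pathSegment p 0 (m + 1)) := by
  have hsplit : pathSegment p 0 (a + 1) ++ (pathSegment p (a + 1) (b + 1) ++
      (pathSegment p (b + 1) (c + 1) ++ pathSegment p (c + 1) (m + 1))) =
      pathSegment p 0 (m + 1) := by
    rw [pathSegment_append (by omega) (by omega), pathSegment_append (by omega) (by omega),
      pathSegment_append (by omega) (by omega)]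
  have hchain : ∀ b c, c ≤ m + 1 → (pathSegment p b c).IsChain r := fun b _ =>
    isChain_pathSegment_of_le hl.2 b.zero_le
  refine extendable_of_perm_cons (l' := pathSegment p 0 (a + 1) ++ (pathSegment p (b + 1) (c + 1) ++
    w :: (pathSegment p (a + 1) (b + 1) ++ pathSegment p (c + 1) (m + 1)))) hl.1 hw ?_ ?_ ?_ ?_
  · rw [← hsplit, List.perm_iff_count]
    intro v
    simp only [List.count_append, List.count_cons]
    ring
  · simp [List.isChain_append, List.isChain_cons, hchain, head?_pathSegment,
      getLast?_pathSegment_succ, hab, hbc, hcm, (hab.trans (hbc.trans hcm)).le,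
      (hbc.trans hcm).le, hcm.le, hab', hcw, hwa, hbc']
  · simp [List.head?_append, head?_pathSegment]
  · simp [List.getLast?_append, List.getLast?_cons, getLast?_pathSegment_succ, hcm]

theorem isRigidPath_of_not_extendable (hl : IsDirPath r (pathSegment p 0 (m + 1)))
    (hext : ¬ Extendable r (pathSegment p 0 (m + 1))) : IsRigidPath r p m where
  injOn a ha b hb := List.inj_on_of_nodup_map hl.1 (by simpa [Nat.lt_succ_iff] using ha)
    (by simpa [Nat.lt_succ_iff] using hb)
  rel_succ a ha := isChain_pathSegment_iff.1 hl.2 a (Nat.zero_le a) (by omega)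
  not_insert a ha w hw haw hwa := by
    rw [← toFinset_pathSegment, List.mem_toFinset] at hw
    exact hext (extendable_of_insert hl ha hw haw hwa)
  not_reroute a b c hab hbc hcm w hw hab' hcw hwa hbc' := by
    rw [← toFinset_pathSegment, List.mem_toFinset] at hw
    exact hext (extendable_of_reroute hl hab hbc hcm hw hab' hcw hwa hbc')

namespace IsRigidPath

theorem card_pathVerts (h : IsRigidPath r p m) : #(pathVerts p m) = m + 1 := by
  rw [pathVerts, card_image_of_injOn, card_range]
  exact fun a ha b hb => h.injOn (by simpa [Nat.lt_succ_iff] using ha)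
    (by simpa [Nat.lt_succ_iff] using hb)

theorem reverse (h : IsRigidPath r p m) :
    IsRigidPath (Function.swap r) (fun j => p (m - j)) m := by
  refine ⟨fun a ha b hb hab => ?_, fun a ha => ?_, ?_, ?_⟩
  · have := h.injOn (Nat.sub_le m a) (Nat.sub_le m b) hab
    simp only [Set.mem_Iic] at ha hb
    omega
  · have := h.rel_succ (m - (a + 1)) (by omega)
    rwa [show m - (a + 1) + 1 = m - a by omega] at this
  · rw [pathVerts_reverse]
    intro a ha w hw haw hwa
    refine h.not_insert (m - (a + 1)) (by omega) w hw hwa ?_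
    rwa [show m - (a + 1) + 1 = m - a by omega]
  · rw [pathVerts_reverse]
    intro a b c hab hbc hcm w hw hab' hcw hwa hbc'
    refine h.not_reroute (m - (c + 1)) (m - (b + 1)) (m - (a + 1)) (by omega) (by omega) (by omega)
      w hw ?_ hwa ?_ ?_
    · rwa [show m - (b + 1) + 1 = m - b by omega]
    · rwa [show m - (c + 1) + 1 = m - c by omega]
    · rwa [show m - (a + 1) + 1 = m - a by omega]

section Threshold

variable {w : α} {a b : ℕ}

theorem rel_of_le (h : IsRigidPath r p m) (hT : IsTournament r) (hw : w ∉ pathVerts p m)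
    (hab : a ≤ b) (hbm : b ≤ m) (haw : r (p a) w) : r (p b) w := by
  induction b, hab using Nat.le_induction with
  | base => exact haw
  | succ b _ ih =>
    exact hT.rel_of_not_rel (apply_ne_of_notMem_pathVerts hbm hw).symm
      (h.not_insert b hbm w hw (ih (by omega)))

theorem rel_of_ge (h : IsRigidPath r p m) (hT : IsTournament r) (hw : w ∉ pathVerts p m)
    (hab : a ≤ b) (hbm : b ≤ m) (hwb : r w (p b)) : r w (p a) := by
  by_contra hwa
  exact hT.asymm hwb (h.rel_of_le hT hw hab hbm
    (hT.rel_of_not_rel (apply_ne_of_notMem_pathVerts (hab.trans hbm) hw).symm hwa))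

theorem lt_of_rel_of_rel (h : IsRigidPath r p m) (hT : IsTournament r) (hw : w ∉ pathVerts p m)
    (ham : a ≤ m) (hwa : r w (p a)) (hbw : r (p b) w) : a < b := by
  by_contra! hba
  exact hT.asymm hwa (h.rel_of_le hT hw hba ham hbw)

theorem exists_notMem_forall_not_two_path [Fintype α] (h : IsRigidPath r p m)
    (hT : IsTournament r) (hne : pathVerts p m ≠ univ) :
    ∃ x ∉ pathVerts p m, ∀ y ∉ pathVerts p m, ∀ q ∈ pathVerts p m, r x q → ¬ r q y := by
  classical
  have hne' : (pathVerts p m)ᶜ.Nonempty := nonempty_iff_ne_empty.2 (by simpa using hne)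
  obtain ⟨x, hx, hmin⟩ := exists_min_image _ (fun w => #(outNbhd r (pathVerts p m) w)) hne'
  simp only [mem_compl] at hx hmin
  refine ⟨x, hx, fun y hy q hq hxq hqy => (hmin y hy).not_gt (card_lt_card ?_)⟩
  rw [ssubset_iff_of_subset]
  · exact ⟨q, mem_outNbhd.2 ⟨hq, hxq⟩, fun hyq => hT.asymm hqy (mem_outNbhd.1 hyq).2⟩
  · intro q' hq'
    obtain ⟨hqP', hyq'⟩ := mem_outNbhd.1 hq'
    obtain ⟨b, hb, rfl⟩ := mem_pathVerts.1 hq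
    obtain ⟨a, ha, rfl⟩ := mem_pathVerts.1 hqP'
    exact mem_outNbhd.2 ⟨hqP', h.rel_of_ge hT hx (h.lt_of_rel_of_rel hT hy ha hyq' hqy).le hb hxq⟩

end Threshold

section Counting

variable [DecidableRel r]

/-- Some outside vertex `w` with `w → p 1` and `p (m - 1) → w` is what makes the path
`p 0 → p (b + 1) ⋯ p (m - 1) → w → p 1 ⋯ p b → p m` available. -/
theorem card_outNbhd_zero_add_card_inNbhd_last_le (h : IsRigidPath r p m) (hT : IsTournament r)
    {w : α} (hw : w ∉ pathVerts p m) (hw1 : r w (p 1)) (hwm : r (p (m - 1)) w) :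
    #(outNbhd r (pathVerts p m) (p 0)) + #(inNbhd r (pathVerts p m) (p m)) ≤ m + 2 := by
  set J : Finset ℕ := {b ∈ range m | r (p 0) (p (b + 1))} with hJ
  set K : Finset ℕ := {b ∈ range m | r (p b) (p m)} with hK
  have hout : outNbhd r (pathVerts p m) (p 0) ⊆ J.image fun b => p (b + 1) := by
    intro q hq
    obtain ⟨hqP, h0q⟩ := mem_outNbhd.1 hq
    obtain ⟨_ | b, hb, rfl⟩ := mem_pathVerts.1 hqP
    · exact absurd h0q (hT.1 _)
    · exact mem_image.2 ⟨b, mem_filter.2 ⟨mem_range.2 hb, h0q⟩, rfl⟩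
  have hin : inNbhd r (pathVerts p m) (p m) ⊆ K.image p := by
    intro q hq
    obtain ⟨hqP, hqm⟩ := mem_inNbhd.1 hq
    obtain ⟨b, hb, rfl⟩ := mem_pathVerts.1 hqP
    have hbm : b ≠ m := fun hbm => hT.ne hqm (congrArg p hbm)
    exact mem_image.2 ⟨b, mem_filter.2 ⟨mem_range.2 (hb.lt_of_ne hbm), hqm⟩, rfl⟩
  have hinter : J ∩ K ⊆ {0, m - 1} := by
    intro b hb
    simp only [hJ, hK, mem_inter, mem_filter, mem_range] at hb
    by_contra hne
    simp only [mem_insert, mem_singleton, not_or] at hne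
    refine h.not_reroute 0 b (m - 1) (by omega) (by omega) (by omega) w hw hb.1.2 hwm hw1 ?_
    rw [show m - 1 + 1 = m by omega]
    exact hb.2.2
  have hunion : #(J ∪ K) ≤ m :=
    (card_le_card (union_subset (filter_subset _ _) (filter_subset _ _))).trans_eq (card_range m)
  calc #(outNbhd r (pathVerts p m) (p 0)) + #(inNbhd r (pathVerts p m) (p m))
      ≤ #J + #K := add_le_add ((card_le_card hout).trans card_image_le)
        ((card_le_card hin).trans card_image_le)
    _ = #(J ∪ K) + #(J ∩ K) := (card_union_add_card_inter J K).symm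
    _ ≤ m + 2 := add_le_add hunion ((card_le_card hinter).trans card_le_two)

variable [Fintype α] {a π i : ℕ} {x : α}

theorem two_mul_lt_card_outNbhd (h : IsRigidPath r p m) (hT : IsTournament r)
    (hπ : ∀ x y : α, x ≠ y → π ≤ p2 r x y) (ha : a < m) (hback : ∀ b < a, ¬ r (p a) (p b)) :
    2 * π < #(outNbhd r (pathVerts p m) (p a)) := by
  refine hT.two_mul_lt_card_outNbhd hπ
    ⟨p (a + 1), mem_outNbhd.2 ⟨apply_mem_pathVerts ha, h.rel_succ a ha⟩⟩ ?_
  intro y hy hay q haq hqy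
  obtain ⟨b, hb, rfl⟩ := mem_pathVerts.1 hy
  by_contra hq
  exact hback b (h.lt_of_rel_of_rel hT hq hb hqy haq) hay

theorem two_mul_lt_card_outNbhd_zero (h : IsRigidPath r p m) (hT : IsTournament r)
    (hπ : ∀ x y : α, x ≠ y → π ≤ p2 r x y) (hm : 0 < m) :
    2 * π < #(outNbhd r (pathVerts p m) (p 0)) :=
  h.two_mul_lt_card_outNbhd hT hπ hm fun _ hb => absurd hb (Nat.not_lt_zero _)

theorem two_mul_lt_card_inNbhd_last (h : IsRigidPath r p m) (hT : IsTournament r)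
    (hπ : ∀ x y : α, x ≠ y → π ≤ p2 r x y) (hm : 0 < m) :
    2 * π < #(inNbhd r (pathVerts p m) (p m)) := by
  simpa only [pathVerts_reverse, outNbhd_swap, Nat.sub_zero] using
    h.reverse.two_mul_lt_card_outNbhd_zero hT.swap (le_p2_swap hπ) hm

theorem two_mul_lt_of_pos (h : IsRigidPath r p m) (hT : IsTournament r)
    (hπ : ∀ x y : α, x ≠ y → π ≤ p2 r x y) (hm : 0 < m) : 2 * π < m := by
  have hout := h.two_mul_lt_card_outNbhd_zero hT hπ hm
  have hcard := hT.card_inNbhd_add_card_outNbhd_add_one (apply_mem_pathVerts (p := p) m.zero_le)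
  rw [h.card_pathVerts] at hcard
  omega

theorem exists_two_mul_add_card_le_inDeg (h : IsRigidPath r p m) (hT : IsTournament r)
    (ha : a ≤ m) (hX : (outNbhd r (pathVerts p m)ᶜ (p a)).Nonempty) :
    ∃ x, 2 * (m + 1) + #(outNbhd r (pathVerts p m)ᶜ (p a)) ≤ 2 * inDeg r x + 1 + 2 * a := by
  have hcard : #((Icc a m).image p) = m + 1 - a := by
    rw [card_image_of_injOn (h.injOn.mono fun b hb => (mem_Icc.1 hb).2), Nat.card_Icc]
  have hdom : ∀ q ∈ (Icc a m).image p, ∀ x ∈ outNbhd r (pathVerts p m)ᶜ (p a), r q x := by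
    intro q hq x hx
    obtain ⟨b, hb, rfl⟩ := mem_image.1 hq
    obtain ⟨hab, hbm⟩ := mem_Icc.1 hb
    exact h.rel_of_le hT (mem_compl.1 (mem_outNbhd.1 hx).1) hab hbm (mem_outNbhd.1 hx).2
  obtain ⟨x, -, hx⟩ := hT.exists_two_mul_card_add_card_le_inDeg hX hdom
  exact ⟨x, by omega⟩

theorem exists_two_mul_add_card_le_outDeg (h : IsRigidPath r p m) (hT : IsTournament r)
    (ha : a ≤ m) (hX : (inNbhd r (pathVerts p m)ᶜ (p (m - a))).Nonempty) :
    ∃ x, 2 * (m + 1) + #(inNbhd r (pathVerts p m)ᶜ (p (m - a))) ≤ 2 * outDeg r x + 1 + 2 * a := by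
  have hrev := h.reverse.exists_two_mul_add_card_le_inDeg hT.swap ha
  rw [pathVerts_reverse] at hrev
  exact hrev hX

theorem nonempty_outNbhd_compl_zero (h : IsRigidPath r p m) (hT : IsTournament r)
    (hp2 : ∀ x y : α, x ≠ y → 0 < p2 r x y) (hK : (inNbhd r (pathVerts p m)ᶜ (p m)).Nonempty) :
    (outNbhd r (pathVerts p m)ᶜ (p 0)).Nonempty := by
  obtain ⟨y, hy⟩ := hK
  obtain ⟨hyP, hym⟩ := mem_inNbhd.1 hy
  rw [mem_compl] at hyP
  obtain ⟨q, h0q, hqy⟩ := exists_two_path (hp2 _ _ (apply_ne_of_notMem_pathVerts m.zero_le hyP))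
  refine ⟨q, mem_outNbhd.2 ⟨mem_compl.2 fun hq => ?_, h0q⟩⟩
  obtain ⟨b, hb, rfl⟩ := mem_pathVerts.1 hq
  exact hT.asymm hqy (h.rel_of_ge hT hyP hb le_rfl hym)

theorem nonempty_inNbhd_compl_last_iff (h : IsRigidPath r p m) (hT : IsTournament r)
    (hp2 : ∀ x y : α, x ≠ y → 0 < p2 r x y) :
    (inNbhd r (pathVerts p m)ᶜ (p m)).Nonempty ↔ (outNbhd r (pathVerts p m)ᶜ (p 0)).Nonempty := by
  refine ⟨h.nonempty_outNbhd_compl_zero hT hp2, fun hX => ?_⟩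
  have hrev := h.reverse.nonempty_outNbhd_compl_zero hT.swap (le_p2_swap hp2)
  simp only [pathVerts_reverse, outNbhd_swap, inNbhd_swap, Nat.sub_self] at hrev
  exact hrev hX

theorem three_mul_lt_of_nonempty (h : IsRigidPath r p m) (hT : IsTournament r)
    (hi : ∀ u, ((outDeg r u : ℤ) - inDeg r u).natAbs ≤ i)
    (hsum : #(outNbhd r (pathVerts p m) (p 0)) + #(inNbhd r (pathVerts p m) (p m)) ≤ m + 2)
    (hX : (outNbhd r (pathVerts p m)ᶜ (p 0)).Nonempty)
    (hY : (inNbhd r (pathVerts p m)ᶜ (p m)).Nonempty) : 3 * m < Fintype.card α + 3 * i := by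
  obtain ⟨x, hx⟩ := h.exists_two_mul_add_card_le_inDeg hT m.zero_le hX
  obtain ⟨y, hy⟩ := h.exists_two_mul_add_card_le_outDeg hT m.zero_le hY
  rw [Nat.sub_zero] at hy
  have hout := outDeg_eq_card_outNbhd_add_card_outNbhd_compl r (pathVerts p m) (p 0)
  have hin := inDeg_eq_card_inNbhd_add_card_inNbhd_compl r (pathVerts p m) (p m)
  have hdeg0 := hT.inDeg_add_outDeg_add_one (p 0)
  have hdegm := hT.inDeg_add_outDeg_add_one (p m)
  have hdegx := hT.inDeg_add_outDeg_add_one x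
  have hdegy := hT.inDeg_add_outDeg_add_one y
  have hi0 := hi (p 0)
  have him := hi (p m)
  have hix := hi x
  have hiy := hi y
  omega

theorem nonempty_outNbhd_compl_of_forall_not_two_path (h : IsRigidPath r p m)
    (hT : IsTournament r) (hp2 : ∀ x y : α, x ≠ y → 2 ≤ p2 r x y) (hx : x ∉ pathVerts p m)
    (hx0 : r x (p 0)) (hxm : r (p m) x)
    (hmin : ∀ y ∉ pathVerts p m, ∀ q ∈ pathVerts p m, r x q → ¬ r q y) :
    (outNbhd r (pathVerts p m)ᶜ x).Nonempty := by
  by_contra hempty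
  have hout : ∀ q, r x q → q ∈ pathVerts p m := fun q hxq => by
    by_contra hq
    exact hempty ⟨q, mem_outNbhd.2 ⟨mem_compl.2 hq, hxq⟩⟩
  obtain ⟨t, htm, hxt, htx⟩ := exists_threshold hT hx hx0 hxm
  obtain ⟨b, htb, hbm, htb'⟩ : ∃ b, t < b ∧ b < m ∧ r (p t) (p (b + 1)) := by
    obtain ⟨q, hne, htq, hqx⟩ := exists_two_path_ne (hp2 (p t) x (hT.ne hxt).symm) (p (t + 1))
    have hq : q ∈ pathVerts p m := by
      by_contra hq
      exact hmin q hq (p t) (apply_mem_pathVerts htm.le) hxt htq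
    obtain ⟨c, hc, rfl⟩ := mem_pathVerts.1 hq
    have htc := h.lt_of_rel_of_rel hT hx htm.le hxt hqx
    have hct : c ≠ t + 1 := fun h => hne (congrArg p h)
    exact ⟨c - 1, by omega, by omega, by rwa [Nat.sub_add_cancel (by omega)]⟩
  obtain ⟨a, hat, hat'⟩ : ∃ a < t, r (p a) (p (t + 1)) := by
    obtain ⟨q, hne, hxq, hqt⟩ := exists_two_path_ne (hp2 x (p (t + 1)) (hT.ne htx).symm) (p t)
    obtain ⟨a, ha, rfl⟩ := mem_pathVerts.1 (hout q hxq)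
    have hat := h.lt_of_rel_of_rel hT hx ha hxq htx
    have hta : a ≠ t := fun h => hne (congrArg p h)
    exact ⟨a, by omega, hqt⟩
  exact h.not_reroute a t b hat htb hbm x hx hat' (h.rel_of_le hT hx htb hbm.le htx)
    (h.rel_of_ge hT hx hat htm.le hxt) htb'

theorem two_mul_add_lt_card_of_forall_rel (h : IsRigidPath r p m) (hT : IsTournament r)
    (hπ : ∀ x y : α, x ≠ y → π ≤ p2 r x y) (h2π : 2 ≤ π) (hne : pathVerts p m ≠ univ)
    (h0 : ∀ w ∉ pathVerts p m, r w (p 0)) (hm : ∀ w ∉ pathVerts p m, r (p m) w) :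
    2 * π + (m + 1) < Fintype.card α := by
  obtain ⟨x, hx, hmin⟩ := h.exists_notMem_forall_not_two_path hT hne
  have hN := h.nonempty_outNbhd_compl_of_forall_not_two_path hT
    (fun x y hxy => h2π.trans (hπ x y hxy)) hx (h0 x hx) (hm x hx) hmin
  have hout := hT.two_mul_lt_card_outNbhd hπ hN fun y hy _ q hxq hqy => mem_compl.2 fun hq =>
    hmin y (mem_compl.1 hy) q hq hxq hqy
  have hsub : #(outNbhd r (pathVerts p m)ᶜ x) ≤ #(pathVerts p m)ᶜ := card_filter_le _ _
  have hcompl := card_add_card_compl (pathVerts p m)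
  rw [h.card_pathVerts] at hcompl
  omega

theorem rel_one_or_rel_pred_last (h : IsRigidPath r p m) (hT : IsTournament r) (hm : 0 < m)
    (hπ : ∀ x y : α, x ≠ y → π ≤ p2 r x y) (h2π : 2 ≤ π)
    (hi : ∀ u, ((outDeg r u : ℤ) - inDeg r u).natAbs ≤ i)
    (hbig : 6 * i + Fintype.card α + 8 < 12 * π) {w : α} (hw : w ∉ pathVerts p m) :
    r (p 1) w ∨ r w (p (m - 1)) := by
  by_contra! hnot
  have hw1 := hT.rel_of_not_rel (apply_ne_of_notMem_pathVerts hm hw) hnot.1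
  have hwm := hT.rel_of_not_rel (apply_ne_of_notMem_pathVerts (m.sub_le 1) hw).symm hnot.2
  have hsum := h.card_outNbhd_zero_add_card_inNbhd_last_le hT hw hw1 hwm
  have hout := h.two_mul_lt_card_outNbhd_zero hT hπ hm
  have hin := h.two_mul_lt_card_inNbhd_last hT hπ hm
  have hiff := h.nonempty_inNbhd_compl_last_iff hT fun x y hxy =>
    (Nat.zero_lt_of_lt h2π).trans_le (hπ x y hxy)
  obtain hX | hX := (outNbhd r (pathVerts p m)ᶜ (p 0)).eq_empty_or_nonempty
  · have hY : inNbhd r (pathVerts p m)ᶜ (p m) = ∅ := by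
      rw [← not_nonempty_iff_eq_empty, hiff, hX]
      exact not_nonempty_empty
    have hupper := hT.card_le_of_nbhd_compl_eq_empty hi hX hY
    have hlower := h.two_mul_add_lt_card_of_forall_rel hT hπ h2π
      (fun huniv => hw (huniv ▸ mem_univ w))
      (fun v hv => hT.rel_of_not_rel (apply_ne_of_notMem_pathVerts m.zero_le hv) fun hr =>
        notMem_empty v (hX ▸ mem_outNbhd.2 ⟨mem_compl.2 hv, hr⟩))
      (fun v hv => hT.rel_of_not_rel (apply_ne_of_notMem_pathVerts le_rfl hv).symm fun hr =>
        notMem_empty v (hY ▸ mem_inNbhd.2 ⟨mem_compl.2 hv, hr⟩))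
    omega
  · have := h.three_mul_lt_of_nonempty hT hi hsum hX (hiff.2 hX)
    omega

theorem nonempty_outNbhd_compl_one (h : IsRigidPath r p m) (hT : IsTournament r) (hm : 0 < m)
    (hp2 : ∀ x y : α, x ≠ y → 2 ≤ p2 r x y) (hne : pathVerts p m ≠ univ)
    (hcov : ∀ w ∉ pathVerts p m, r (p 1) w ∨ r w (p (m - 1))) :
    (outNbhd r (pathVerts p m)ᶜ (p 1)).Nonempty := by
  by_contra hempty
  have hnot : ∀ q ∉ pathVerts p m, ¬ r (p 1) q := fun q hq h1q =>
    hempty ⟨q, mem_outNbhd.2 ⟨mem_compl.2 hq, h1q⟩⟩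
  obtain ⟨w, hw⟩ : ∃ w, w ∉ pathVerts p m := by simpa [eq_univ_iff_forall] using hne
  have hwm : r w (p (m - 1)) := (hcov w hw).resolve_left (hnot w hw)
  obtain ⟨q, hqm, h0q, hqw⟩ :=
    exists_two_path_ne (hp2 (p 0) w (apply_ne_of_notMem_pathVerts m.zero_le hw)) (p m)
  by_cases hq : q ∈ pathVerts p m
  · obtain ⟨b, hb, rfl⟩ := mem_pathVerts.1 hq
    have hlt := h.lt_of_rel_of_rel hT hw (m.sub_le 1) hwm hqw
    exact hqm (congrArg p (by omega))
  · exact hnot q hq (h.rel_of_le hT hq zero_le_one hm h0q)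

theorem nonempty_inNbhd_compl_pred_last (h : IsRigidPath r p m) (hT : IsTournament r) (hm : 0 < m)
    (hp2 : ∀ x y : α, x ≠ y → 2 ≤ p2 r x y) (hne : pathVerts p m ≠ univ)
    (hcov : ∀ w ∉ pathVerts p m, r (p 1) w ∨ r w (p (m - 1))) :
    (inNbhd r (pathVerts p m)ᶜ (p (m - 1))).Nonempty := by
  have hrev := h.reverse.nonempty_outNbhd_compl_one hT.swap hm (le_p2_swap hp2)
  rw [pathVerts_reverse, Nat.sub_sub_self hm] at hrev
  exact hrev hne fun w hw => (hcov w hw).symm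

theorem three_mul_le_of_forall_rel (h : IsRigidPath r p m) (hT : IsTournament r) (hm : 0 < m)
    (hp2 : ∀ x y : α, x ≠ y → 2 ≤ p2 r x y)
    (hi : ∀ u, ((outDeg r u : ℤ) - inDeg r u).natAbs ≤ i) (hne : pathVerts p m ≠ univ)
    (hcov : ∀ w ∉ pathVerts p m, r (p 1) w ∨ r w (p (m - 1))) :
    3 * m ≤ Fintype.card α + 2 * i + 1 := by
  have hX := h.nonempty_outNbhd_compl_one hT hm hp2 hne hcov
  have hY := h.nonempty_inNbhd_compl_pred_last hT hm hp2 hne hcov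
  obtain ⟨x, hx⟩ := h.exists_two_mul_add_card_le_inDeg (a := 1) hT hm hX
  obtain ⟨y, hy⟩ := h.exists_two_mul_add_card_le_outDeg (a := 1) hT hm hY
  have hsub : (pathVerts p m)ᶜ ⊆
      outNbhd r (pathVerts p m)ᶜ (p 1) ∪ inNbhd r (pathVerts p m)ᶜ (p (m - 1)) := fun w hw =>
    mem_union.2 ((hcov w (mem_compl.1 hw)).imp (fun h1w => mem_outNbhd.2 ⟨hw, h1w⟩)
      fun hwm => mem_inNbhd.2 ⟨hw, hwm⟩)
  have hcover := (card_le_card hsub).trans (card_union_le _ _)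
  have hcompl := card_add_card_compl (pathVerts p m)
  rw [h.card_pathVerts] at hcompl
  have hdegx := hT.inDeg_add_outDeg_add_one x
  have hdegy := hT.inDeg_add_outDeg_add_one y
  have hix := hi x
  have hiy := hi y
  omega

theorem two_mul_le_card_inNbhd_one (h : IsRigidPath r p m) (hT : IsTournament r) (hm : 0 < m)
    (hπ : ∀ x y : α, x ≠ y → π ≤ p2 r x y)
    (hcov : ∀ w ∉ pathVerts p m, r (p 1) w ∨ r w (p (m - 1))) :
    2 * π ≤ #(inNbhd r (pathVerts p m) (p 1)) + 1 := by
  have hne : p 0 ≠ p m := fun h0m => hm.ne (h.injOn (Set.mem_Iic.2 m.zero_le) Set.self_mem_Iic h0m)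
  have h0 : p 0 ∈ (inNbhd r (pathVerts p m) (p 1)).erase (p m) :=
    mem_erase.2 ⟨hne, mem_inNbhd.2 ⟨apply_mem_pathVerts m.zero_le, h.rel_succ 0 hm⟩⟩
  obtain ⟨y, hy, hlt⟩ := hT.exists_two_mul_p2_to_lt (x := p 1) (E := {p m}) ⟨p 0, h0⟩ (by
    intro y hy q hyq hq1
    obtain ⟨hym, hy⟩ := mem_erase.1 hy
    obtain ⟨b, hb, rfl⟩ := mem_pathVerts.1 (mem_inNbhd.1 hy).1
    refine or_iff_not_imp_right.2 fun hqm => mem_erase.2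
      ⟨fun h => hqm (mem_singleton.2 h), mem_inNbhd.2 ⟨?_, hq1⟩⟩
    by_contra hq
    have hqm1 : r q (p (m - 1)) := (hcov q hq).resolve_left (hT.asymm hq1)
    have hmb := h.lt_of_rel_of_rel hT hq (m.sub_le 1) hqm1 hyq
    exact hym (congrArg p (by omega)))
  have hle := hπ y (p 1) (hT.ne (mem_inNbhd.1 (mem_of_mem_erase hy)).2)
  have herase := card_erase_le (s := inNbhd r (pathVerts p m) (p 1)) (a := p m)
  rw [card_singleton] at hlt
  omega

theorem four_mul_le_of_forall_rel (h : IsRigidPath r p m) (hT : IsTournament r) (hm : 1 < m)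
    (hπ : ∀ x y : α, x ≠ y → π ≤ p2 r x y)
    (hcov : ∀ w ∉ pathVerts p m, r (p 1) w ∨ r w (p (m - 1))) : 4 * π ≤ m := by
  have hout := h.two_mul_lt_card_outNbhd hT hπ hm fun b hb => by
    obtain rfl := Nat.lt_one_iff.1 hb
    exact hT.asymm (h.rel_succ 0 hm.le)
  have hin := h.two_mul_le_card_inNbhd_one hT hm.le hπ hcov
  have hcard := hT.card_inNbhd_add_card_outNbhd_add_one (apply_mem_pathVerts (p := p) hm.le)
  rw [h.card_pathVerts] at hcard
  omega

theorem pathVerts_eq_univ (h : IsRigidPath r p m) (hT : IsTournament r) (hm : 0 < m)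
    (hπ : ∀ x y : α, x ≠ y → π ≤ p2 r x y) (h2π : 2 ≤ π)
    (hi : ∀ u, ((outDeg r u : ℤ) - inDeg r u).natAbs ≤ i)
    (hbig : 6 * i + Fintype.card α + 8 < 12 * π) : pathVerts p m = univ := by
  by_contra hne
  have hcov : ∀ w ∉ pathVerts p m, r (p 1) w ∨ r w (p (m - 1)) := fun w hw =>
    h.rel_one_or_rel_pred_last hT hm hπ h2π hi hbig hw
  have h2πm := h.two_mul_lt_of_pos hT hπ hm
  have hlower := h.four_mul_le_of_forall_rel hT (by omega) hπ hcov
  have hupper := h.three_mul_le_of_forall_rel hT hm (fun x y hxy => h2π.trans (hπ x y hxy)) hi hne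
    hcov
  omega

end Counting

end IsRigidPath

end RigidPath

theorem stmt17 (r : V → V → Prop) [DecidableRel r] (hT : IsTournament r)
    (hn : 9 ≤ Fintype.card V)
    (π i : ℕ) (hπ : IsPi2 r π) (hi : IsIrreg r i)
    (hπbig : (Fintype.card V : ℤ) - 9 < 12 * π)
    (hibig : (6 * i : ℤ) < 12 * π - (Fintype.card V + 8)) :
    PathExtendable r := by
  intro l hl hlen hne
  by_contra hext
  obtain ⟨p, hp⟩ := exists_eq_pathSegment (List.ne_nil_of_length_pos (by omega : 0 < l.length))
  obtain ⟨m, hm⟩ : ∃ m, l.length = m + 1 := ⟨l.length - 1, by omega⟩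
  rw [hm] at hp
  rw [hp] at hl hext hne
  rw [toFinset_pathSegment] at hne
  exact hne ((isRigidPath_of_not_extendable hl hext).pathVerts_eq_univ hT (by omega) hπ.1
    (by omega) hi.1 (by omega))
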